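/- Let U be a contractible open subset of ℂ, let {U_δ}_{δ∈I} be an open cover of U, and let q_δ : U_δ → SL(2,ℂ) be real analytic maps such that for all α, β ∈ I the map h_{αβ} := q_α q_β⁻¹ is upper triangular at every point of U_α ∩ U_β. Then this cocycle is a coboundary: there exist real analytic maps h_δ : U_δ → SL(2,ℂ) taking values in upper triangular matrices such that q_α q_β⁻¹ = h_α h_β⁻¹ on U_α ∩ U_β for all α, β; equivalently, the map g defined locally by g = h_δ⁻¹ q_δ on U_δ is a well-defined real analytic map g : U → SL(2,ℂ). (Cocycle–coboundary step in the proof of Lemma 4.1.) -/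

import Mathlib

open Matrix Complex

noncomputable section

/-!
The condition on `q_α q_β⁻¹` says that the bottom rows of the `q_δ` span a well-defined complex line
`L z ⊆ ℂ²` at each `z ∈ U`. If `s` is a nowhere vanishing real analytic section of `L`, complete it
to a real analytic `g : U → SL(2, ℂ)` with bottom row `s`; then `h_δ = q_δ g⁻¹` is upper triangular.

For a continuous section, let `P z` be the orthogonal projection onto `L z` and follow a contraction
of `U` from `z` to a base point in steps so small that consecutive projections are at distance less
than `1`. Composing these projections carries a vector of the line at the base point to a nonzero
vector of `L z`; further steps at the base point change nothing, so the number of steps, which jumps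
with `z`, does not affect the result. Normalise the section to length one, approximate it
within distance less than `1` by a real analytic map `w`, and take `s z = P z (w z)`.

The approximation is an average of values of the section with weights `K_a ^ e a`, where each `K_a`
is a rational function at least `1` on a ball of a locally finite cover and less than `1` off its
closure, and the exponents `e a` are distinct and so large that far balls hardly contribute.
-/

section ParallelTransport

open Topology unitInterval

section Transport

variable {𝕜 E : Type*} [NontriviallyNormedField 𝕜] [NormedAddCommGroup E] [NormedSpace 𝕜 E]

/-- Discrete parallel transport along a sequence of projections: the composite
`Q 0 ∘ Q 1 ∘ ⋯ ∘ Q (n - 1)`, which carries the range of `Q (n - 1)` to the range of `Q 0`. -/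
def transport (Q : ℕ → E →L[𝕜] E) (n : ℕ) : E →L[𝕜] E :=
  ((List.range n).map Q).prod

theorem transport_succ (Q : ℕ → E →L[𝕜] E) (n : ℕ) :
    transport Q (n + 1) = transport Q n * Q n :=
  List.prod_range_succ Q n

theorem continuous_transport {X : Type*} [TopologicalSpace X] {Q : X → ℕ → E →L[𝕜] E}
    (hQ : ∀ k, Continuous fun x => Q x k) (n : ℕ) : Continuous fun x => transport (Q x) n :=
  continuous_list_prod _ fun k _ => hQ k

theorem mul_transport_of_isIdempotentElem {Q : ℕ → E →L[𝕜] E} (h : IsIdempotentElem (Q 0)) (n : ℕ) :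
    Q 0 * transport Q (n + 1) = transport Q (n + 1) := by
  rw [transport, List.prod_range_succ', ← mul_assoc, h.eq]

theorem transport_apply_of_le {Q : ℕ → E →L[𝕜] E} {v : E} {m n : ℕ} (hmn : m ≤ n)
    (hv : ∀ k ≥ m, Q k v = v) : transport Q n v = transport Q m v := by
  induction n, hmn using Nat.le_induction with
  | base => rfl
  | succ n hmn ih => rw [transport_succ, mul_apply_eq_comp, hv n hmn, ih]

theorem apply_ne_zero_of_norm_sub_lt_one {P P' : E →L[𝕜] E} (hP : ‖P' - P‖ < 1) {u : E}
    (hu : u ≠ 0) (hPu : P u = u) : P' u ≠ 0 := by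
  intro h0
  refine lt_irrefl ‖u‖ ?_
  calc ‖u‖ = ‖(P' - P) u‖ := by rw [_root_.sub_apply, h0, hPu, zero_sub, norm_neg]
    _ ≤ ‖P' - P‖ * ‖u‖ := (P' - P).le_opNorm u
    _ < ‖u‖ := mul_lt_of_lt_one_left (norm_pos_iff.2 hu) hP

theorem transport_apply_ne_zero {Q : ℕ → E →L[𝕜] E} (hQ : ∀ k, IsIdempotentElem (Q k))
    (hclose : ∀ k, ‖Q k - Q (k + 1)‖ < 1) (n : ℕ) {u : E} (hu : u ≠ 0) (hfix : Q n u = u) :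
    transport Q (n + 1) u ≠ 0 := by
  induction n generalizing u with
  | zero => simpa [transport, hfix] using hu
  | succ n ih =>
    have hproj : Q n (Q n u) = Q n u := DFunLike.congr_fun (hQ n).eq u
    have hstep : transport Q (n + 1 + 1) u = transport Q (n + 1) (Q n u) := by
      simp only [transport_succ, mul_apply_eq_comp, hfix, hproj]
    rw [hstep]
    exact ih (apply_ne_zero_of_norm_sub_lt_one (hclose n) hu hfix) hproj

theorem continuous_transport_ceil {X : Type*} [TopologicalSpace X] {Q : X → ℕ → E →L[𝕜] E}
    (hQ : ∀ k, Continuous fun x => Q x k) {ε : X → ℝ} (hε : Continuous ε) (hpos : ∀ x, 0 < ε x)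
    {v : E} (hv : ∀ x (k : ℕ), 1 ≤ k * ε x → Q x k v = v) :
    Continuous fun x => transport (Q x) (⌈(ε x)⁻¹⌉₊ + 1) v := by
  refine continuous_iff_continuousAt.2 fun x₀ => ?_
  obtain ⟨m, hm⟩ := exists_nat_gt (ε x₀)⁻¹
  have hnear : ∀ᶠ x in 𝓝 x₀, (ε x)⁻¹ < m :=
    ((hε.tendsto x₀).inv₀ (hpos x₀).ne').eventually (gt_mem_nhds hm)
  have hcont : Continuous fun x => transport (Q x) (m + 1) v :=
    (continuous_transport hQ (m + 1)).clm_apply continuous_const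
  refine hcont.continuousAt.congr (hnear.mono fun x hx => ?_)
  refine transport_apply_of_le (by gcongr; exact Nat.ceil_le.2 hx.le) fun k hk => hv x k ?_
  have hk' : (ε x)⁻¹ ≤ k := (Nat.le_ceil _).trans (by exact_mod_cast (Nat.le_succ _).trans hk)
  exact (inv_le_iff_one_le_mul₀ (hpos x)).1 hk'

end Transport

variable {X : Type*} [TopologicalSpace X] [NormalSpace X] [ParacompactSpace X]

theorem exists_continuous_modulus {K M : Type*} [PseudoMetricSpace K] [CompactSpace K]
    [PseudoMetricSpace M] (f : C(X × K, M)) {δ : ℝ} (hδ : 0 < δ) :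
    ∃ ε : C(X, ℝ), ∀ x, 0 < ε x ∧ ∀ s t, dist s t ≤ ε x → dist (f (x, s)) (f (x, t)) < δ := by
  refine exists_continuous_forall_mem_convex_of_local_const
    (t := fun x => {e | 0 < e ∧ ∀ s t, dist s t ≤ e → dist (f (x, s)) (f (x, t)) < δ})
    (fun x => Set.OrdConnected.convex ⟨?_⟩) fun x₀ => ?_
  · rintro a ⟨ha, -⟩ b ⟨-, hb⟩ e ⟨hae, heb⟩
    exact ⟨ha.trans_le hae, fun s t hst => hb s t (hst.trans heb)⟩
  · have hunif : UniformContinuous (f.curry x₀) :=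
      CompactSpace.uniformContinuous_of_continuous (f.curry x₀).continuous
    obtain ⟨d, hd, hfd⟩ := Metric.uniformContinuous_iff.1 hunif (δ / 3) (by positivity)
    refine ⟨d / 2, ?_⟩
    filter_upwards [Metric.tendsto_nhds.1 (f.curry.continuous.tendsto x₀) (δ / 3) (by positivity)]
      with x hx
    refine ⟨by positivity, fun s t hst => ?_⟩
    have hnear : ∀ r, dist (f (x, r)) (f (x₀, r)) < δ / 3 := fun r =>
      (ContinuousMap.dist_apply_le_dist r).trans_lt hx
    have hmid : dist (f (x₀, s)) (f (x₀, t)) < δ / 3 := hfd (by linarith)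
    calc dist (f (x, s)) (f (x, t))
        ≤ dist (f (x, s)) (f (x₀, s)) + dist (f (x₀, s)) (f (x₀, t))
          + dist (f (x₀, t)) (f (x, t)) := dist_triangle4 _ _ _ _
      _ < δ := by
        rw [dist_comm (f (x₀, t))]
        linarith [hnear s, hnear t]

variable {𝕜 E : Type*} [NontriviallyNormedField 𝕜] [NormedAddCommGroup E] [NormedSpace 𝕜 E]

theorem exists_continuous_section_of_isIdempotentElem [ContractibleSpace X]
    {P : X → E →L[𝕜] E} (hP : Continuous P) (hidem : ∀ x, IsIdempotentElem (P x))
    (hne : ∀ x, P x ≠ 0) :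
    ∃ v : X → E, Continuous v ∧ ∀ x, v x ≠ 0 ∧ P x (v x) = v x := by
  obtain ⟨p, ⟨H⟩⟩ := id_nullhomotopic X
  let path : C(X × I, E →L[𝕜] E) := ⟨fun y => P (H (y.2, y.1)), by fun_prop⟩
  obtain ⟨ε, hε⟩ := exists_continuous_modulus path one_pos
  obtain ⟨u, hu⟩ : ∃ u, P p u ≠ 0 := by
    by_contra! h
    exact hne p (ContinuousLinearMap.ext h)
  have hfix : P p (P p u) = P p u := DFunLike.congr_fun (hidem p).eq u
  let Q (x : X) (k : ℕ) : E →L[𝕜] E := path (x, Set.projIcc 0 1 zero_le_one (k * ε x))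
  have hQ₀ : ∀ x, Q x 0 = P x := fun x => by simp [Q, path]
  have hQ₁ : ∀ x (k : ℕ), 1 ≤ k * ε x → Q x k = P p := fun x k hk => by
    simp [Q, path, Set.projIcc_of_right_le _ hk]
  have hQc : ∀ k, Continuous fun x => Q x k := fun k =>
    path.continuous.comp <| continuous_id.prodMk <|
      continuous_projIcc.comp <| continuous_const.mul ε.continuous
  have hQi : ∀ x k, IsIdempotentElem (Q x k) := fun x k => hidem _
  have hQclose : ∀ x k, ‖Q x k - Q x (k + 1)‖ < 1 := fun x k => by
    rw [← dist_eq_norm]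
    refine (hε x).2 _ _ ?_
    calc dist (Set.projIcc (0 : ℝ) 1 zero_le_one (k * ε x)) (Set.projIcc 0 1 zero_le_one _)
        ≤ dist (k * ε x) ((k + 1 : ℕ) * ε x) := by
          simpa using (LipschitzWith.projIcc (zero_le_one (α := ℝ))).dist_le_mul _ _
      _ = ε x := by
          rw [Real.dist_eq, ← sub_mul, abs_mul, abs_of_pos (hε x).1]
          simp
  refine ⟨fun x => transport (Q x) (⌈(ε x)⁻¹⌉₊ + 1) (P p u),
    continuous_transport_ceil hQc ε.continuous (fun x => (hε x).1) fun x k hk => ?_,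
    fun x => ⟨transport_apply_ne_zero (hQi x) (hQclose x) _ hu ?_, ?_⟩⟩
  · rw [hQ₁ x k hk, hfix]
  · rw [hQ₁ x _ ((inv_le_iff_one_le_mul₀ (hε x).1).1 (Nat.le_ceil _)), hfix]
  · rw [← hQ₀ x]
    exact DFunLike.congr_fun (mul_transport_of_isIdempotentElem (hQi x 0) _) _

end ParallelTransport

section AnalyticApproximation

open Filter Topology BoundedContinuousFunction
open scoped ContDiff

section PowerSeries

variable {𝕜 E F : Type*} [NontriviallyNormedField 𝕜] [NormedAddCommGroup E] [NormedSpace 𝕜 E]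
  [CompleteSpace E] [NormedAddCommGroup F] [NormedSpace 𝕜 F]

theorem analyticAt_tsum_pow_smul {φ : ℕ → F →L[𝕜] 𝕜} (hφ : ∀ n, ‖φ n‖ ≤ 1) {v : ℕ → E} {C : ℝ}
    (hv : ∀ n, ‖v n‖ ≤ C) {x : F} (hx : ‖x‖ < 1) :
    AnalyticAt 𝕜 (fun y => ∑' n, φ n y ^ n • v n) x := by
  let p : FormalMultilinearSeries 𝕜 F E := fun n =>
    (ContinuousMultilinearMap.mkPiRing 𝕜 (Fin n) (v n)).compContinuousLinearMap fun _ => φ n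
  have hp : ∀ n, ‖p n‖ ≤ C := fun n => calc
    ‖p n‖ ≤ ‖v n‖ * ‖φ n‖ ^ n := by
      simpa using (ContinuousMultilinearMap.mkPiRing 𝕜 (Fin n)
        (v n)).norm_compContinuousLinearMap_le fun _ => φ n
    _ ≤ ‖v n‖ := mul_le_of_le_one_right (norm_nonneg _) (pow_le_one₀ (norm_nonneg _) (hφ n))
    _ ≤ C := hv n
  have hradius : 1 ≤ p.radius := by
    simpa using p.le_radius_of_bound (r := 1) C fun n => by simpa using hp n
  have hsum : p.sum = fun y => ∑' n, φ n y ^ n • v n := by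
    funext y
    simp [FormalMultilinearSeries.sum, p]
  rw [← hsum]
  refine (p.hasFPowerSeriesOnBall (one_pos.trans_le hradius)).analyticAt_of_mem ?_
  refine Metric.eball_subset_eball hradius ?_
  simpa [← ENNReal.ofReal_one, Metric.eball_ofReal] using hx

theorem analyticAt_tsum_apply_pow_smul {α : Type*} [TopologicalSpace α] {e : α → ℕ}
    (he : e.Injective) {v : α → E} {C : ℝ} (hv : ∀ a, ‖v a‖ ≤ C) {x : α →ᵇ 𝕜} (hx : ‖x‖ < 1) :
    AnalyticAt 𝕜 (fun y : α →ᵇ 𝕜 => ∑' a, y a ^ e a • v a) x := by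
  let φ : ℕ → (α →ᵇ 𝕜) →L[𝕜] 𝕜 := e.extend (fun a => evalCLM 𝕜 a) 0
  have hφ : ∀ n, ‖φ n‖ ≤ 1 := fun n => by
    by_cases hn : ∃ a, e a = n
    · obtain ⟨a, rfl⟩ := hn
      simp only [φ, he.extend_apply]
      refine ContinuousLinearMap.opNorm_le_bound _ zero_le_one fun y => ?_
      simpa using y.norm_coe_le_norm a
    · simp [φ, Function.extend_apply' _ _ _ hn]
  have hv' : ∀ n, ‖e.extend v 0 n‖ ≤ max C 0 := fun n => by
    by_cases hn : ∃ a, e a = n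
    · obtain ⟨a, rfl⟩ := hn
      simpa [he.extend_apply] using .inl (hv a)
    · simp [Function.extend_apply' _ _ _ hn]
  convert analyticAt_tsum_pow_smul hφ hv' hx using 2 with y
  rw [← tsum_extend_zero he]
  refine tsum_congr fun n => ?_
  by_cases hn : ∃ a, e a = n
  · obtain ⟨a, rfl⟩ := hn
    simp [φ, he.extend_apply]
  · simp [Function.extend_apply' _ _ _ hn]

end PowerSeries

section RationalBump

variable {V : Type*} [NormedAddCommGroup V]

/-- A rational substitute for a bump function: at least `1` on the ball of centre `c` and radius
`r`, less than `1` off its closure, and a quotient of polynomials when `V` is Euclidean. High powers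
of it are almost supported in the ball. -/
def rationalBump (c : V) (r : ℝ) (z : V) : ℝ :=
  2 * r ^ 2 / (r ^ 2 + ‖z - c‖ ^ 2)

theorem rationalBump_nonneg (c : V) (r : ℝ) (z : V) : 0 ≤ rationalBump c r z := by
  unfold rationalBump
  positivity

theorem one_le_rationalBump {c z : V} {r : ℝ} (hr : 0 < r) (hz : dist z c ≤ r) :
    1 ≤ rationalBump c r z := by
  rw [dist_eq_norm] at hz
  rw [rationalBump, one_le_div (by positivity)]
  nlinarith [norm_nonneg (z - c)]

theorem rationalBump_le_one_fifth {c z : V} {r : ℝ} (hr : 0 < r) (hz : 3 * r ≤ dist z c) :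
    rationalBump c r z ≤ 1 / 5 := by
  rw [dist_eq_norm] at hz
  rw [rationalBump, div_le_div_iff₀ (by positivity) (by positivity)]
  nlinarith

theorem exists_lt_one_forall_rationalBump_le {s : ℝ} (hs : 0 < s) :
    ∃ q < 1, ∀ {c z : V} {r : ℝ}, 0 < r → r ≤ 1 → s + r ≤ dist z c → rationalBump c r z ≤ q := by
  refine ⟨2 / (1 + (1 + s) ^ 2), (div_lt_one (by positivity)).2 (by nlinarith), ?_⟩
  intro c z r hr hr1 hz
  rw [dist_eq_norm] at hz
  have hfar : (1 + s) * r ≤ ‖z - c‖ := by nlinarith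
  have hsq : (1 + s) ^ 2 * r ^ 2 ≤ ‖z - c‖ ^ 2 := by
    rw [← mul_pow]
    gcongr
  rw [rationalBump, div_le_div_iff₀ (by positivity) (by positivity)]
  nlinarith

variable {α : Type*} {c : α → V} {r : α → ℝ} {e : α → ℕ}

theorem summable_rationalBump_pow {z : V} (he : e.Injective) (hr : ∀ a, 0 < r a ∧ r a ≤ 1)
    (hfar : ∃ s > 0, ∀ᶠ a in cofinite, s + r a ≤ dist z (c a)) :
    Summable fun a => rationalBump (c a) (r a) z ^ e a := by
  obtain ⟨s, hs, hfar⟩ := hfar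
  obtain ⟨q, hq, hbump⟩ := exists_lt_one_forall_rationalBump_le (V := V) hs
  have hgeom : Summable fun a => max q 0 ^ e a :=
    (summable_geometric_of_lt_one (le_max_right _ _) (max_lt hq one_pos)).comp_injective he
  refine Summable.of_norm_bounded_eventually hgeom (hfar.mono fun a ha => ?_)
  have hnonneg := rationalBump_nonneg (c a) (r a) z
  rw [norm_pow, Real.norm_of_nonneg hnonneg]
  exact pow_le_pow_left₀ hnonneg ((hbump (hr a).1 (hr a).2 ha).trans (le_max_left _ _)) _

theorem eventually_add_le_dist {z₀ : V}
    (hfar : ∃ s > 0, ∀ᶠ a in cofinite, s + r a ≤ dist z₀ (c a)) :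
    ∀ᶠ z in 𝓝 z₀, ∃ s > 0, ∀ᶠ a in cofinite, s + r a ≤ dist z (c a) := by
  obtain ⟨s, hs, hfar⟩ := hfar
  filter_upwards [Metric.ball_mem_nhds z₀ (half_pos hs)] with z hz
  refine ⟨s / 2, half_pos hs, hfar.mono fun a ha => ?_⟩
  have htri := dist_triangle_left z₀ (c a) z
  rw [Metric.mem_ball] at hz
  linarith

theorem one_le_tsum_rationalBump_pow {z : V} (he : e.Injective) (hr : ∀ a, 0 < r a ∧ r a ≤ 1)
    (hfar : ∃ s > 0, ∀ᶠ a in cofinite, s + r a ≤ dist z (c a))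
    (hcover : ∃ a, dist z (c a) ≤ r a) : 1 ≤ ∑' a, rationalBump (c a) (r a) z ^ e a := by
  obtain ⟨a, ha⟩ := hcover
  exact (one_le_pow₀ (one_le_rationalBump (hr a).1 ha)).trans <|
    (summable_rationalBump_pow he hr hfar).le_tsum a fun b _ =>
      pow_nonneg (rationalBump_nonneg _ _ _) _

variable {E : Type*} [NormedAddCommGroup E] [NormedSpace ℝ E]

theorem norm_rationalBump_pow_smul_sub_le {c z : V} {r : ℝ} (hr : 0 < r) (n : ℕ) {v y : E}
    {M η : ℝ} (hv : ‖v‖ ≤ M) (hy : ‖y‖ ≤ M) (hη : 0 ≤ η) (hclose : dist z c < 3 * r → ‖v - y‖ ≤ η) :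
    ‖rationalBump c r z ^ n • (v - y)‖ ≤
      η * rationalBump c r z ^ n + 2 * M * (1 / 5) ^ n := by
  have hM : 0 ≤ M := (norm_nonneg y).trans hy
  have hbump := rationalBump_nonneg c r z
  rw [norm_smul, norm_pow, Real.norm_of_nonneg hbump]
  rcases lt_or_ge (dist z c) (3 * r) with hz | hz
  · calc rationalBump c r z ^ n * ‖v - y‖ ≤ η * rationalBump c r z ^ n := by
          rw [mul_comm]
          gcongr
          exact hclose hz
      _ ≤ _ := le_add_of_nonneg_right (by positivity)
  · calc rationalBump c r z ^ n * ‖v - y‖ ≤ (1 / 5) ^ n * (2 * M) := by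
          gcongr
          · exact rationalBump_le_one_fifth hr hz
          · linarith [norm_sub_le v y]
      _ ≤ _ := by
          rw [mul_comm]
          exact le_add_of_nonneg_left (by positivity)

/-- The average of the values `v a` with weights `rationalBump (c a) (r a) z ^ n a`. -/
def bumpAverage (c : α → V) (r : α → ℝ) (n : α → ℕ) (v : α → E) (z : V) : E :=
  (∑' a, rationalBump (c a) (r a) z ^ n a)⁻¹ • ∑' a, rationalBump (c a) (r a) z ^ n a • v a

variable [CompleteSpace E]

theorem summable_rationalBump_pow_smul {z : V} (he : e.Injective) (hr : ∀ a, 0 < r a ∧ r a ≤ 1)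
    (hfar : ∃ s > 0, ∀ᶠ a in cofinite, s + r a ≤ dist z (c a)) {v : α → E} {C : ℝ}
    (hv : ∀ a, ‖v a‖ ≤ C) :
    Summable fun a => rationalBump (c a) (r a) z ^ e a • v a := by
  refine Summable.of_norm_bounded ((summable_rationalBump_pow he hr hfar).mul_right C) fun a => ?_
  rw [norm_smul, norm_pow, Real.norm_of_nonneg (rationalBump_nonneg _ _ _)]
  exact mul_le_mul_of_nonneg_left (hv a) (pow_nonneg (rationalBump_nonneg _ _ _) _)

theorem norm_bumpAverage_sub_le {z : V} (he : e.Injective) (hr : ∀ a, 0 < r a ∧ r a ≤ 1)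
    (hfar : ∃ s > 0, ∀ᶠ a in cofinite, s + r a ≤ dist z (c a))
    (hcover : ∃ a, dist z (c a) ≤ r a) {v : α → E} {y : E} {M η : ℝ} (hv : ∀ a, ‖v a‖ ≤ M)
    (hy : ‖y‖ ≤ M) (hclose : ∀ a, dist z (c a) < 3 * r a → ‖v a - y‖ ≤ η) :
    ‖bumpAverage c r e v z - y‖ ≤ η + 2 * M * ∑' a, (1 / 5) ^ e a := by
  have hη : 0 ≤ η := by
    obtain ⟨a, ha⟩ := hcover
    exact (norm_nonneg _).trans (hclose a (by linarith [(hr a).1]))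
  have hM : 0 ≤ M := (norm_nonneg y).trans hy
  have hK := summable_rationalBump_pow he hr hfar
  have hK_one := one_le_tsum_rationalBump_pow he hr hfar hcover
  set S := ∑' a, rationalBump (c a) (r a) z ^ e a with hS
  have hpos : 0 < S := one_pos.trans_le hK_one
  have hgeom : Summable fun a => (1 / 5 : ℝ) ^ e a :=
    (summable_geometric_of_lt_one (by norm_num) (by norm_num)).comp_injective he
  have hdiff : bumpAverage c r e v z - y =
      S⁻¹ • ∑' a, rationalBump (c a) (r a) z ^ e a • (v a - y) := by
    simp only [smul_sub]
    rw [(summable_rationalBump_pow_smul he hr hfar hv).tsum_sub (hK.smul_const y),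
      hK.tsum_smul_const, ← hS, smul_sub, inv_smul_smul₀ hpos.ne', bumpAverage]
  have hbound : ‖∑' a, rationalBump (c a) (r a) z ^ e a • (v a - y)‖ ≤
      η * S + 2 * M * ∑' a, (1 / 5) ^ e a :=
    tsum_of_norm_bounded ((hK.hasSum.mul_left η).add (hgeom.hasSum.mul_left (2 * M))) fun a =>
      norm_rationalBump_pow_smul_sub_le (hr a).1 _ (hv a) hy hη (hclose a)
  have htail : 0 ≤ 2 * M * ∑' a, (1 / 5 : ℝ) ^ e a :=
    mul_nonneg (by positivity) (tsum_nonneg fun a => by positivity)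
  rw [hdiff, norm_smul, norm_inv, Real.norm_of_nonneg hpos.le, inv_mul_le_iff₀ hpos]
  nlinarith

variable [InnerProductSpace ℝ V]

theorem analyticAt_rationalBump (c : V) {r : ℝ} (hr : 0 < r) (z : V) :
    AnalyticAt ℝ (rationalBump c r) z := by
  have hden : ContDiff ℝ ω fun z : V => r ^ 2 + ‖z - c‖ ^ 2 :=
    contDiff_const.add ((contDiff_id.sub contDiff_const).norm_sq ℝ)
  exact (contDiff_const.div hden fun z => by positivity).contDiffAt.analyticAt

theorem rationalBump_eq_mul_inv {c z z₀ : V} {r : ℝ} (hr : 0 < r) :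
    rationalBump c r z = rationalBump c r z₀ *
      (1 + (2 * inner ℝ (z - z₀) (z₀ - c) + ‖z - z₀‖ ^ 2) / (r ^ 2 + ‖z₀ - c‖ ^ 2))⁻¹ := by
  have hpos : ∀ y : V, r ^ 2 + ‖y - c‖ ^ 2 ≠ 0 := fun y => by positivity
  have hexpand : ‖z - c‖ ^ 2 = ‖z - z₀‖ ^ 2 + 2 * inner ℝ (z - z₀) (z₀ - c) + ‖z₀ - c‖ ^ 2 := by
    rw [← norm_add_sq_real, sub_add_sub_cancel]
  have hsplit : 1 + (2 * inner ℝ (z - z₀) (z₀ - c) + ‖z - z₀‖ ^ 2) / (r ^ 2 + ‖z₀ - c‖ ^ 2) =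
      (r ^ 2 + ‖z - c‖ ^ 2) / (r ^ 2 + ‖z₀ - c‖ ^ 2) := by
    rw [hexpand, eq_div_iff (hpos z₀), add_mul, div_mul_cancel₀ _ (hpos z₀)]
    ring
  rw [hsplit, inv_div, rationalBump, rationalBump, div_mul_div_cancel₀ (hpos z₀)]

theorem exists_analyticAt_eq_inner_add_norm_sq_div [TopologicalSpace α] [DiscreteTopology α]
    {d : α → V} {D : α → ℝ} {s : ℝ} (hs : 0 < s) (hd : ∀ a, s ≤ ‖d a‖)
    (hD : ∀ a, ‖d a‖ ^ 2 ≤ D a) (z₀ : V) :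
    ∃ u : V → α →ᵇ ℝ, AnalyticAt ℝ u z₀ ∧
      ∀ z a, u z a = (2 * inner ℝ (z - z₀) (d a) + ‖z - z₀‖ ^ 2) / D a := by
  have hDpos : ∀ a, 0 < D a := fun a => (pow_pos (hs.trans_le (hd a)) 2).trans_le (hD a)
  have hlin : ∀ w a, ‖inner ℝ w (d a) / D a‖ ≤ s⁻¹ * ‖w‖ := fun w a => by
    rw [norm_div, Real.norm_of_nonneg (hDpos a).le, div_le_iff₀ (hDpos a)]
    calc ‖inner ℝ w (d a)‖ ≤ ‖w‖ * ‖d a‖ := norm_inner_le_norm _ _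
      _ = s⁻¹ * ‖w‖ * (s * ‖d a‖) := by field_simp
      _ ≤ s⁻¹ * ‖w‖ * D a := by
        gcongr
        nlinarith [hd a, hD a]
  have hconst : ∀ a, ‖(D a)⁻¹‖ ≤ (s ^ 2)⁻¹ := fun a => by
    rw [norm_inv, Real.norm_of_nonneg (hDpos a).le]
    exact inv_anti₀ (by positivity) ((pow_le_pow_left₀ hs.le (hd a) 2).trans (hD a))
  let T : V →L[ℝ] α →ᵇ ℝ := LinearMap.mkContinuous
    { toFun := fun w => ofNormedAddCommGroupDiscrete (fun a => inner ℝ w (d a) / D a) _ (hlin w)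
      map_add' := fun w w' => by
        ext a
        simp [inner_add_left, add_div]
      map_smul' := fun t w => by
        ext a
        simp [inner_smul_left, mul_div_assoc] } s⁻¹ fun w =>
      (BoundedContinuousFunction.norm_le (by positivity)).2 (hlin w)
  let b : α →ᵇ ℝ := ofNormedAddCommGroupDiscrete (fun a => (D a)⁻¹) _ hconst
  refine ⟨fun z => (2 : ℝ) • T (z - z₀) + ‖z - z₀‖ ^ 2 • b, ?_, fun z a => ?_⟩
  · have hsub : ContDiff ℝ ω fun z => z - z₀ := contDiff_id.sub contDiff_const
    exact (((T.contDiff.comp hsub).const_smul 2).add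
      ((hsub.norm_sq ℝ).smul contDiff_const)).contDiffAt.analyticAt
  · change 2 * (inner ℝ (z - z₀) (d a) / D a) + ‖z - z₀‖ ^ 2 * (D a)⁻¹ = _
    ring

-- Near `z₀` all the bumps together form one analytic map into the Banach algebra of bounded
-- functions on `α`, so analyticity of their infinite sum is a composition.
theorem exists_analyticAt_eq_rationalBump [TopologicalSpace α] [DiscreteTopology α] {z₀ : V}
    (hr : ∀ a, 0 < r a ∧ r a ≤ 1) {s : ℝ} (hs : 0 < s) (hfar : ∀ a, s + r a ≤ dist z₀ (c a)) :
    ∃ x : V → α →ᵇ ℝ, AnalyticAt ℝ x z₀ ∧ ‖x z₀‖ < 1 ∧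
      ∀ᶠ z in 𝓝 z₀, ∀ a, x z a = rationalBump (c a) (r a) z := by
  obtain ⟨q, hq, hbump⟩ := exists_lt_one_forall_rationalBump_le (V := V) hs
  have hnorm : ∀ a, ‖rationalBump (c a) (r a) z₀‖ ≤ max q 0 := fun a => by
    rw [Real.norm_of_nonneg (rationalBump_nonneg _ _ _)]
    exact (hbump (hr a).1 (hr a).2 (hfar a)).trans (le_max_left _ _)
  let x₀ : α →ᵇ ℝ := ofNormedAddCommGroupDiscrete _ _ hnorm
  obtain ⟨u, hu, hu_apply⟩ := exists_analyticAt_eq_inner_add_norm_sq_div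
    (d := fun a => z₀ - c a) (D := fun a => r a ^ 2 + ‖z₀ - c a‖ ^ 2) hs
    (fun a => by
      rw [← dist_eq_norm]
      linarith [hfar a, (hr a).1]) (fun a => le_add_of_nonneg_left (sq_nonneg _)) z₀
  have hu₀ : 1 + u z₀ = ((1 : (α →ᵇ ℝ)ˣ) : α →ᵇ ℝ) := by
    ext a
    simp [hu_apply]
  have hanalytic : AnalyticAt ℝ (fun z => 1 + u z) z₀ := analyticAt_const.add hu
  refine ⟨fun z => x₀ * Ring.inverse (1 + u z), ?_, ?_, ?_⟩
  · exact analyticAt_const.mul ((analyticAt_inverse 1).comp_of_eq hanalytic hu₀)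
  · beta_reduce
    rw [hu₀, Ring.inverse_unit, inv_one, Units.val_one, mul_one]
    exact ((BoundedContinuousFunction.norm_le (le_max_right _ _)).2 hnorm).trans_lt
      (max_lt hq one_pos)
  · have hunit : ∀ᶠ z in 𝓝 z₀, IsUnit (1 + u z) :=
      hanalytic.continuousAt.eventually_mem (hu₀ ▸ Units.nhds 1)
    filter_upwards [hunit] with z hz a
    have hinv : (1 + u z) a * Ring.inverse (1 + u z) a = 1 :=
      DFunLike.congr_fun (Ring.mul_inverse_cancel _ hz) a
    rw [rationalBump_eq_mul_inv (z₀ := z₀) (hr a).1, ← hu_apply z a]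
    exact congrArg (x₀ a * ·) (eq_inv_of_mul_eq_one_right hinv)

theorem analyticAt_tsum_rationalBump_pow_smul_of_forall {z₀ : V} (he : e.Injective)
    (hr : ∀ a, 0 < r a ∧ r a ≤ 1) {s : ℝ} (hs : 0 < s) (hfar : ∀ a, s + r a ≤ dist z₀ (c a))
    {v : α → E} {C : ℝ} (hv : ∀ a, ‖v a‖ ≤ C) :
    AnalyticAt ℝ (fun z => ∑' a, rationalBump (c a) (r a) z ^ e a • v a) z₀ := by
  let : TopologicalSpace α := ⊥
  have : DiscreteTopology α := ⟨rfl⟩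
  obtain ⟨x, hx, hx₀, hxz⟩ := exists_analyticAt_eq_rationalBump hr hs hfar
  refine ((analyticAt_tsum_apply_pow_smul he hv hx₀).comp hx).congr (hxz.mono fun z hz => ?_)
  simp only [Function.comp_apply, hz]

theorem analyticAt_tsum_rationalBump_pow_smul {z₀ : V} (he : e.Injective)
    (hr : ∀ a, 0 < r a ∧ r a ≤ 1) (hfar : ∃ s > 0, ∀ᶠ a in cofinite, s + r a ≤ dist z₀ (c a))
    {v : α → E} {C : ℝ} (hv : ∀ a, ‖v a‖ ≤ C) :
    AnalyticAt ℝ (fun z => ∑' a, rationalBump (c a) (r a) z ^ e a • v a) z₀ := by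
  have hfar_near := eventually_add_le_dist hfar
  obtain ⟨s, hs, hfar⟩ := hfar
  let near : Finset α := hfar.toFinset
  have htail : AnalyticAt ℝ (fun z => ∑' a : {a // a ∉ near},
      rationalBump (c a) (r a) z ^ e a • v a) z₀ :=
    analyticAt_tsum_rationalBump_pow_smul_of_forall (α := {a // a ∉ near})
      (he.comp Subtype.val_injective) (fun a => hr a) hs
      (fun a => by_contra fun ha => a.prop (hfar.mem_toFinset.2 ha)) fun a => hv a
  have hhead : AnalyticAt ℝ (fun z => ∑ a ∈ near, rationalBump (c a) (r a) z ^ e a • v a) z₀ :=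
    Finset.analyticAt_fun_sum _ fun a _ =>
      ((analyticAt_rationalBump (c a) (hr a).1 z₀).pow (e a)).smul analyticAt_const
  refine (hhead.add htail).congr (hfar_near.mono fun z hz => ?_)
  exact (summable_rationalBump_pow_smul he hr hz hv).sum_add_tsum_subtype_compl near

theorem analyticAt_bumpAverage {z₀ : V} (he : e.Injective) (hr : ∀ a, 0 < r a ∧ r a ≤ 1)
    (hfar : ∃ s > 0, ∀ᶠ a in cofinite, s + r a ≤ dist z₀ (c a))
    (hcover : ∃ a, dist z₀ (c a) ≤ r a) {v : α → E} {C : ℝ} (hv : ∀ a, ‖v a‖ ≤ C) :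
    AnalyticAt ℝ (bumpAverage c r e v) z₀ := by
  refine AnalyticAt.smul (AnalyticAt.inv ?_ ?_) ?_
  · simpa using analyticAt_tsum_rationalBump_pow_smul (v := fun _ => (1 : ℝ)) he hr hfar
      fun _ => norm_one.le
  · exact (one_pos.trans_le (one_le_tsum_rationalBump_pow he hr hfar hcover)).ne'
  · exact analyticAt_tsum_rationalBump_pow_smul he hr hfar hv

end RationalBump

section Cover

universe u

variable {V : Type u} [NormedAddCommGroup V] [NormedSpace ℝ V] [ProperSpace V]

theorem exists_countable_locallyFinite_ball_cover {U : Set V} (hU : IsOpen U) {R : V → ℝ}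
    (hR : ∀ z ∈ U, 0 < R z) :
    ∃ (α : Type u) (_ : Countable α) (c : α → V) (r : α → ℝ),
      (∀ a, c a ∈ U) ∧ (∀ a, 0 < r a ∧ r a ≤ R (c a)) ∧
      (∀ z ∈ U, ∃ a, dist z (c a) ≤ r a) ∧
      ∀ z ∈ U, ∃ s > 0, ∀ᶠ a in cofinite, s + r a ≤ dist z (c a) := by
  have : LocallyCompactSpace U := hU.locallyCompactSpace
  have hbasis : ∀ x : U, (𝓝 x).HasBasis (fun ρ => 0 < ρ ∧ ρ ≤ R x) (Metric.ball x) := fun x =>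
    Metric.nhds_basis_ball.restrict fun ρ hρ => ⟨min ρ (R x), lt_min hρ (hR x x.2),
      min_le_right _ _, Metric.ball_subset_ball (min_le_left _ _)⟩
  obtain ⟨α, c, r, hr, hcover, hfin⟩ :=
    refinement_of_locallyCompact_sigmaCompact_of_nhds_basis hbasis
  refine ⟨α, ?_, fun a => c a, r, fun a => (c a).2, hr, fun z hz => ?_, fun z hz => ?_⟩
  · exact Set.countable_univ_iff.1
      (hfin.countable_univ fun a => ⟨c a, Metric.mem_ball_self (hr a).1⟩)
  · obtain ⟨a, ha⟩ := Set.mem_iUnion.1 (hcover.ge (Set.mem_univ (⟨z, hz⟩ : U)))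
    exact ⟨a, (Metric.mem_ball.1 ha).le⟩
  · obtain ⟨t, ht, hfin⟩ := hfin ⟨z, hz⟩
    obtain ⟨s, hs, hsU, hst⟩ :
        ∃ s > 0, Metric.ball z s ⊆ U ∧ ∀ w : U, dist (w : V) z < s → w ∈ t := by
      obtain ⟨s, hs, hst⟩ := Metric.mem_nhds_iff.1 ht
      obtain ⟨ρ, hρ, hρU⟩ := Metric.isOpen_iff.1 hU z hz
      exact ⟨min s ρ, lt_min hs hρ, (Metric.ball_subset_ball (min_le_right _ _)).trans hρU,
        fun w hw => hst (lt_min_iff.1 hw).1⟩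
    refine ⟨s, hs, hfin.subset fun a ha => ?_⟩
    have hmeet : ¬Disjoint (Metric.ball z s) (Metric.ball (c a : V) (r a)) := fun hdisj =>
      ha ((disjoint_ball_ball_iff hs (hr a).1).1 hdisj)
    obtain ⟨w, hwz, hwc⟩ := Set.not_disjoint_iff.1 hmeet
    exact ⟨⟨w, hsU hwz⟩, hwc, hst ⟨w, hsU hwz⟩ hwz⟩

theorem exists_ball_cover_dist_le {M : Type*} [PseudoMetricSpace M] {U : Set V} (hU : IsOpen U)
    {f : V → M} (hf : ContinuousOn f U) {ε : ℝ} (hε : 0 < ε) :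
    ∃ (α : Type u) (_ : Countable α) (c : α → V) (r : α → ℝ),
      (∀ a, c a ∈ U) ∧ (∀ a, 0 < r a ∧ r a ≤ 1) ∧
      (∀ z ∈ U, ∃ a, dist z (c a) ≤ r a) ∧
      (∀ z ∈ U, ∃ s > 0, ∀ᶠ a in cofinite, s + r a ≤ dist z (c a)) ∧
      ∀ z ∈ U, ∀ a, dist z (c a) < 3 * r a → dist (f (c a)) (f z) < ε := by
  have hosc : ∀ y ∈ U, ∃ ρ > 0, ρ ≤ 1 ∧ ∀ z ∈ U, dist z y < 3 * ρ → dist (f z) (f y) < ε := by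
    intro y hy
    obtain ⟨ρ, hρ, hfρ⟩ := Metric.continuousOn_iff.1 hf y hy ε hε
    refine ⟨min (ρ / 3) 1, by positivity, min_le_right _ _, fun z hz hzy => hfρ z hz ?_⟩
    linarith [min_le_left (ρ / 3) 1]
  choose! R hRpos hR1 hR using hosc
  obtain ⟨α, hα, c, r, hcU, hr, hcover, hfar⟩ := exists_countable_locallyFinite_ball_cover hU hRpos
  refine ⟨α, hα, c, r, hcU, fun a => ⟨(hr a).1, (hr a).2.trans (hR1 _ (hcU a))⟩, hcover, hfar,
    fun z hz a hza => ?_⟩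
  rw [dist_comm]
  exact hR _ (hcU a) z hz (hza.trans_le (by linarith [(hr a).2]))

end Cover

theorem exists_injective_tsum_pow_lt (α : Type*) [Countable α] {q δ : ℝ} (hq : 0 ≤ q) (hq1 : q < 1)
    (hδ : 0 < δ) : ∃ e : α → ℕ, e.Injective ∧ ∑' a, q ^ e a < δ := by
  obtain ⟨e, he⟩ := exists_injective_nat α
  have hlim : Tendsto (fun m => (∑' a, q ^ e a) * q ^ m) atTop (𝓝 0) := by
    simpa using (tendsto_pow_atTop_nhds_zero_of_lt_one hq hq1).const_mul (∑' a, q ^ e a)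
  obtain ⟨m, hm⟩ := (hlim.eventually (gt_mem_nhds hδ)).exists
  refine ⟨fun a => e a + m, (add_left_injective m).comp he, ?_⟩
  simpa only [pow_add, tsum_mul_right] using hm

theorem exists_analyticOnNhd_norm_sub_lt {V E : Type*} [NormedAddCommGroup V]
    [InnerProductSpace ℝ V] [FiniteDimensional ℝ V] [NormedAddCommGroup E] [NormedSpace ℝ E]
    [CompleteSpace E] {U : Set V} (hU : IsOpen U) {f : V → E} (hf : ContinuousOn f U) {M : ℝ}
    (hM : ∀ z ∈ U, ‖f z‖ ≤ M) {ε : ℝ} (hε : 0 < ε) :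
    ∃ g : V → E, AnalyticOnNhd ℝ g U ∧ ∀ z ∈ U, ‖g z - f z‖ < ε := by
  obtain ⟨α, _, c, r, hcU, hr, hcover, hfar, hclose⟩ :=
    exists_ball_cover_dist_le hU hf (half_pos hε)
  have hδ : 0 < ε / 2 / (2 * max M 1) := by positivity
  obtain ⟨e, he, htail⟩ :=
    exists_injective_tsum_pow_lt α (q := 1 / 5) (by norm_num) (by norm_num) hδ
  rw [lt_div_iff₀ (by positivity)] at htail
  have hfc : ∀ z ∈ U, ‖f z‖ ≤ max M 1 := fun z hz => (hM z hz).trans (le_max_left _ _)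
  refine ⟨bumpAverage c r e fun a => f (c a), fun z hz =>
    analyticAt_bumpAverage he hr (hfar z hz) (hcover z hz) fun a => hfc _ (hcU a), fun z hz => ?_⟩
  have hbound := norm_bumpAverage_sub_le he hr (hfar z hz) (hcover z hz) (fun a => hfc _ (hcU a))
    (hfc z hz) fun a ha => by simpa only [dist_eq_norm] using (hclose z hz a ha).le
  linarith

end AnalyticApproximation

section AnalyticSection

open Topology Submodule
open scoped ContDiff

section IdempotentFamily

variable {V E : Type*} [NormedAddCommGroup V] [NormedAddCommGroup E] [NormedSpace ℝ E]

theorem exists_continuousOn_unit_section_of_isIdempotentElem {U : Set V} [ContractibleSpace U]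
    {P : V → E →L[ℝ] E} (hP : ContinuousOn P U) (hidem : ∀ z ∈ U, IsIdempotentElem (P z))
    (hne : ∀ z ∈ U, P z ≠ 0) :
    ∃ v : V → E, ContinuousOn v U ∧ ∀ z ∈ U, ‖v z‖ = 1 ∧ P z (v z) = v z := by
  obtain ⟨u, hu, hPu⟩ := exists_continuous_section_of_isIdempotentElem (X := U)
    (continuousOn_iff_continuous_domRestrict.1 hP) (fun z => hidem z z.2) fun z => hne z z.2
  have hu_norm : ∀ x, ‖u x‖ ≠ 0 := fun x => norm_ne_zero_iff.2 (hPu x).1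
  let v : V → E := Function.extend Subtype.val (fun x => ‖u x‖⁻¹ • u x) 0
  have hv : ∀ x : U, v x = ‖u x‖⁻¹ • u x := Subtype.val_injective.extend_apply _ _
  refine ⟨v, ?_, fun z hz => ⟨?_, ?_⟩⟩
  · rw [continuousOn_iff_continuous_domRestrict, show U.domRestrict v = _ from funext hv]
    exact (hu.norm.inv₀ hu_norm).smul hu
  · rw [hv ⟨z, hz⟩, norm_smul, norm_inv, norm_norm, inv_mul_cancel₀ (hu_norm _)]
  · rw [hv ⟨z, hz⟩, map_smul]
    exact congrArg _ (hPu ⟨z, hz⟩).2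

theorem exists_analyticOnNhd_section_of_isIdempotentElem [InnerProductSpace ℝ V]
    [FiniteDimensional ℝ V] [CompleteSpace E] {U : Set V} (hU : IsOpen U) [ContractibleSpace U]
    {P : V → E →L[ℝ] E} (hP : AnalyticOnNhd ℝ P U) (hidem : ∀ z ∈ U, IsIdempotentElem (P z))
    (hne : ∀ z ∈ U, P z ≠ 0) {C : ℝ} (hC : ∀ z ∈ U, ‖P z‖ ≤ C) :
    ∃ s : V → E, AnalyticOnNhd ℝ s U ∧ ∀ z ∈ U, s z ≠ 0 ∧ P z (s z) = s z := by
  obtain ⟨v, hv, hPv⟩ :=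
    exists_continuousOn_unit_section_of_isIdempotentElem hP.continuousOn hidem hne
  obtain ⟨w, hw, hwv⟩ := exists_analyticOnNhd_norm_sub_lt hU hv (fun z hz => (hPv z hz).1.le)
    (show 0 < (max C 1)⁻¹ by positivity)
  refine ⟨fun z => P z (w z), fun z hz => ?_, fun z hz => ⟨?_, ?_⟩⟩
  · exact ((hP z hz).contDiffAt.clm_apply (hw z hz).contDiffAt).analyticAt
  · have hclose : ‖P z (w z) - v z‖ < 1 := calc
      ‖P z (w z) - v z‖ = ‖P z (w z - v z)‖ := by rw [map_sub, (hPv z hz).2]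
      _ ≤ max C 1 * ‖w z - v z‖ := (P z).le_of_opNorm_le ((hC z hz).trans (le_max_left _ _)) _
      _ < max C 1 * (max C 1)⁻¹ := by
        gcongr
        exact hwv z hz
      _ = 1 := mul_inv_cancel₀ (by positivity)
    intro (h0 : P z (w z) = 0)
    rw [h0, zero_sub, norm_neg, (hPv z hz).1] at hclose
    exact hclose.false
  · exact DFunLike.congr_fun (hidem z hz).eq (w z)

end IdempotentFamily

section LineField

theorem analyticOnNhd_starProjection_span_singleton (E : Type*) [NormedAddCommGroup E]
    [InnerProductSpace ℂ E] [FiniteDimensional ℂ E] :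
    AnalyticOnNhd ℝ (fun w : E => (ℂ ∙ w).starProjection.restrictScalars ℝ) {0}ᶜ := by
  rw [← isOpen_compl_singleton.analyticOn_iff_analyticOnNhd, ← contDiffOn_omega_iff_analyticOn
    isOpen_compl_singleton.uniqueDiffOn]
  refine contDiffOn_clm_apply.2 fun x => ?_
  have hformula : ∀ w : E, (ℂ ∙ w).starProjection x = (‖w‖ ^ 2)⁻¹ • (inner ℂ w x • w) := fun w => by
    rw [starProjection_singleton, RCLike.real_smul_eq_coe_smul (K := ℂ), smul_smul, div_eq_inv_mul,
      RCLike.ofReal_inv]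
  have hinv : ContDiffOn ℝ ω (fun w : E => (‖w‖ ^ 2)⁻¹) {0}ᶜ :=
    (contDiffOn_id.norm_sq ℂ).inv fun w hw => by simpa using hw
  exact (hinv.smul ((contDiffOn_id.inner ℂ contDiffOn_const).smul contDiffOn_id)).congr fun w _ =>
    hformula w

variable {V E : Type*} [NormedAddCommGroup V] [InnerProductSpace ℝ V] [FiniteDimensional ℝ V]
  [NormedAddCommGroup E] {U : Set V}

theorem exists_analyticOnNhd_section_of_span_singleton [InnerProductSpace ℂ E]
    [FiniteDimensional ℂ E] (hU : IsOpen U) [ContractibleSpace U] {L : V → Submodule ℂ E}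
    (hL : ∀ z ∈ U, ∃ l : V → E, AnalyticAt ℝ l z ∧ l z ≠ 0 ∧ ∀ᶠ y in 𝓝 z, L y = ℂ ∙ l y) :
    ∃ s : V → E, AnalyticOnNhd ℝ s U ∧ ∀ z ∈ U, s z ≠ 0 ∧ s z ∈ L z := by
  have : CompleteSpace E := FiniteDimensional.complete ℂ E
  let P : V → E →L[ℝ] E := fun z => (L z).starProjection.restrictScalars ℝ
  have hP : AnalyticOnNhd ℝ P U := fun z hz => by
    obtain ⟨l, hl, hlz, hLl⟩ := hL z hz
    refine ((analyticOnNhd_starProjection_span_singleton E _ hlz).comp hl).congr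
      (hLl.mono fun y hy => ?_)
    simp only [P, hy, Function.comp_apply]
  have hne : ∀ z ∈ U, P z ≠ 0 := fun z hz h0 => by
    obtain ⟨l, -, hlz, hLl⟩ := hL z hz
    have hmem : l z ∈ L z := hLl.self_of_nhds ▸ mem_span_singleton_self (l z)
    exact hlz ((starProjection_eq_self_iff.2 hmem).symm.trans (DFunLike.congr_fun h0 (l z)))
  obtain ⟨s, hs, hPs⟩ := exists_analyticOnNhd_section_of_isIdempotentElem hU hP
    (fun z _ => ContinuousLinearMap.ext fun x =>
      DFunLike.congr_fun (L z).isIdempotentElem_starProjection.eq x) hne (C := 1)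
    fun z _ => (L z).starProjection_norm_le
  exact ⟨s, hs, fun z hz => ⟨(hPs z hz).1, starProjection_eq_self_iff.1 (hPs z hz).2⟩⟩

theorem exists_analyticOnNhd_section_of_span_eq [NormedSpace ℂ E] [FiniteDimensional ℂ E]
    (hU : IsOpen U) [ContractibleSpace U] {ι : Type*} {W : ι → Set V} (hW : ∀ δ, IsOpen (W δ))
    (hUW : U = ⋃ δ, W δ) {l : ι → V → E} (hl : ∀ δ, AnalyticOnNhd ℝ (l δ) (W δ))
    (hne : ∀ δ, ∀ z ∈ W δ, l δ z ≠ 0)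
    (hspan : ∀ α β, ∀ z ∈ W α ∩ W β, ℂ ∙ l α z = ℂ ∙ l β z) :
    ∃ s : V → E, AnalyticOnNhd ℝ s U ∧ ∀ δ, ∀ z ∈ W δ, ℂ ∙ l δ z = ℂ ∙ s z := by
  have : CompleteSpace E := FiniteDimensional.complete ℂ E
  let e : E ≃L[ℂ] EuclideanSpace ℂ (Fin (Module.finrank ℂ E)) :=
    ContinuousLinearEquiv.ofFinrankEq finrank_euclideanSpace_fin.symm
  have he : ∀ {x y : E}, ℂ ∙ x = ℂ ∙ y → ℂ ∙ e x = ℂ ∙ e y := fun hxy => by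
    obtain ⟨t, rfl⟩ := span_singleton_eq_span_singleton.1 hxy
    exact span_singleton_eq_span_singleton.2 ⟨t, (map_smul e (t : ℂ) _).symm⟩
  have hel : ∀ δ, AnalyticOnNhd ℝ (fun y => e (l δ y)) (W δ) := fun δ =>
    (e.toContinuousLinearMap.restrictScalars ℝ).comp_analyticOnNhd (hl δ)
  let L (z : V) : Submodule ℂ (EuclideanSpace ℂ (Fin (Module.finrank ℂ E))) :=
    ⨆ δ : {δ // z ∈ W δ}, ℂ ∙ e (l δ z)
  have hL : ∀ δ, ∀ z ∈ W δ, L z = ℂ ∙ e (l δ z) := fun δ z hz => by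
    have : Nonempty {δ // z ∈ W δ} := ⟨δ, hz⟩
    exact (iSup_congr fun β : {δ // z ∈ W δ} => he (hspan β δ z ⟨β.2, hz⟩)).trans ciSup_const
  obtain ⟨s, hs, hsL⟩ := exists_analyticOnNhd_section_of_span_singleton hU (L := L) fun z hz => by
    obtain ⟨δ, hδ⟩ := Set.mem_iUnion.1 (hUW ▸ hz)
    exact ⟨fun y => e (l δ y), hel δ z hδ, by simpa using hne δ z hδ,
      ((hW δ).eventually_mem hδ).mono (hL δ)⟩
  refine ⟨fun z => e.symm (s z),
    (e.symm.toContinuousLinearMap.restrictScalars ℝ).comp_analyticOnNhd hs, fun δ z hz => ?_⟩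
  obtain ⟨hsz, hmem⟩ := hsL z (hUW ▸ Set.mem_iUnion_of_mem δ hz)
  obtain ⟨t, ht⟩ := mem_span_singleton.1 (hL δ z hz ▸ hmem)
  have ht0 : t ≠ 0 := fun h0 => hsz (by rw [← ht, h0, zero_smul])
  beta_reduce
  rw [← ht, map_smul, e.symm_apply_apply, span_singleton_smul_eq ht0.isUnit]

end LineField

end AnalyticSection

section BottomRow

open Submodule

section Span

variable {K : Type*} [Field K]

theorem mul_inv_one_zero_eq_zero_iff {M N : Matrix (Fin 2) (Fin 2) K} (hM : M.det ≠ 0)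
    (hN : N.det ≠ 0) : (M * N⁻¹) 1 0 = 0 ↔ K ∙ M 1 = K ∙ N 1 := by
  constructor
  · intro h
    have hrow : M 1 = (M * N⁻¹) 1 1 • N 1 := by
      rw [← nonsing_inv_mul_cancel_right N M hN.isUnit, mul_apply_eq_vecMul,
        nonsing_inv_mul_cancel_right N M hN.isUnit, vecMul_eq_sum, Fin.sum_univ_two, h, zero_smul,
        zero_add]
    have hne : (M * N⁻¹) 1 1 ≠ 0 := fun h0 => hM <| det_eq_zero_of_row_eq_zero 1 fun j => by
      rw [hrow, h0, zero_smul, Pi.zero_apply]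
    rw [hrow, span_singleton_smul_eq hne.isUnit]
  · intro h
    obtain ⟨t, ht⟩ := span_singleton_eq_span_singleton.1 h.symm
    rw [mul_apply_eq_vecMul, ← ht, Units.smul_def, smul_vecMul, ← mul_apply_eq_vecMul,
      mul_nonsing_inv N hN.isUnit, Pi.smul_apply, one_apply_ne one_ne_zero, smul_zero]

end Span

section MatrixAnalytic

variable {𝕜 V K m n p : Type*} [NontriviallyNormedField 𝕜] [NormedAddCommGroup V]
  [NormedSpace 𝕜 V] [NormedField K] [NormedAlgebra 𝕜 K] {z : V}

theorem analyticAt_mul_apply [Fintype n] {M : V → Matrix m n K} {N : V → Matrix n p K}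
    (hM : ∀ i j, AnalyticAt 𝕜 (fun y => M y i j) z) (hN : ∀ i j, AnalyticAt 𝕜 (fun y => N y i j) z)
    (i : m) (j : p) : AnalyticAt 𝕜 (fun y => (M y * N y) i j) z := by
  simp only [mul_apply]
  exact Finset.univ.analyticAt_fun_sum fun k _ => (hM i k).mul (hN k j)

variable [Fintype n] [DecidableEq n]

theorem analyticAt_det {M : V → Matrix n n K} (hM : ∀ i j, AnalyticAt 𝕜 (fun y => M y i j) z) :
    AnalyticAt 𝕜 (fun y => (M y).det) z := by
  simp only [det_apply']
  exact Finset.univ.analyticAt_fun_sum fun σ _ =>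
    analyticAt_const.mul (Finset.univ.analyticAt_fun_prod fun i _ => hM (σ i) i)

theorem analyticAt_inv_apply [CompleteSpace K] {M : V → Matrix n n K}
    (hM : ∀ i j, AnalyticAt 𝕜 (fun y => M y i j) z) (hdet : (M z).det ≠ 0) (i j : n) :
    AnalyticAt 𝕜 (fun y => (M y)⁻¹ i j) z := by
  simp only [Matrix.inv_def, Ring.inverse_eq_inv', Matrix.smul_apply, smul_eq_mul, adjugate_apply]
  refine ((analyticAt_det hM).inv hdet).mul (analyticAt_det fun k l => ?_)
  by_cases hk : k = j
  · simpa only [hk, updateRow_self] using analyticAt_const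
  · simpa only [updateRow_ne hk] using hM k l

end MatrixAnalytic

section Completion

variable {V : Type*} [NormedAddCommGroup V] [NormedSpace ℝ V] {U : Set V}

open scoped ComplexOrder in
theorem exists_analyticOnNhd_dotProduct_eq_one {n : Type*} [Fintype n] {s : V → n → ℂ}
    (hs : AnalyticOnNhd ℝ s U) (hne : ∀ z ∈ U, s z ≠ 0) :
    ∃ c : V → n → ℂ, AnalyticOnNhd ℝ c U ∧ ∀ z ∈ U, c z ⬝ᵥ s z = 1 := by
  have hstar : AnalyticOnNhd ℝ (fun z => star (s z)) U :=
    (starL' ℝ (A := n → ℂ)).toContinuousLinearMap.comp_analyticOnNhd hs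
  have hnormSq : ∀ z ∈ U, star (s z) ⬝ᵥ s z ≠ 0 := fun z hz =>
    dotProduct_star_self_eq_zero.not.2 (hne z hz)
  have hanalytic : AnalyticOnNhd ℝ (fun z => star (s z) ⬝ᵥ s z) U := fun z hz =>
    Finset.univ.analyticAt_fun_sum fun i _ =>
      (analyticAt_pi_iff.1 (hstar z hz) i).mul (analyticAt_pi_iff.1 (hs z hz) i)
  refine ⟨fun z => (star (s z) ⬝ᵥ s z)⁻¹ • star (s z), (hanalytic.inv hnormSq).smul hstar,
    fun z hz => ?_⟩
  rw [smul_dotProduct, smul_eq_mul, inv_mul_cancel₀ (hnormSq z hz)]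

theorem exists_analyticOnNhd_det_eq_one_row_eq {s : V → Fin 2 → ℂ} (hs : AnalyticOnNhd ℝ s U)
    (hne : ∀ z ∈ U, s z ≠ 0) :
    ∃ g : V → Matrix (Fin 2) (Fin 2) ℂ, (∀ i j, AnalyticOnNhd ℝ (fun z => g z i j) U) ∧
      ∀ z ∈ U, (g z).det = 1 ∧ g z 1 = s z := by
  obtain ⟨c, hc, hcs⟩ := exists_analyticOnNhd_dotProduct_eq_one hs hne
  refine ⟨fun z => .of ![![c z 1, -c z 0], s z], fun i j z hz => ?_, fun z hz => ⟨?_, rfl⟩⟩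
  · have hcz := analyticAt_pi_iff.1 (hc z hz)
    have hsz := analyticAt_pi_iff.1 (hs z hz)
    fin_cases i
    · fin_cases j
      · exact hcz 1
      · exact (hcz 0).neg
    · exact hsz j
  · simpa [det_fin_two, dotProduct, Fin.sum_univ_two, add_comm] using hcs z hz

end Completion

section Gluing

variable {V ι : Type*} [NormedAddCommGroup V] [InnerProductSpace ℝ V] [FiniteDimensional ℝ V]

theorem exists_analyticOnNhd_mul_inv_one_zero_eq_zero {U : Set V} (hU : IsOpen U)
    [ContractibleSpace U] {W : ι → Set V} (hW : ∀ δ, IsOpen (W δ)) (hUW : U = ⋃ δ, W δ)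
    {q : ι → V → Matrix (Fin 2) (Fin 2) ℂ}
    (hq : ∀ δ i j, AnalyticOnNhd ℝ (fun z => q δ z i j) (W δ))
    (hdet : ∀ δ, ∀ z ∈ W δ, (q δ z).det ≠ 0)
    (hcoc : ∀ α β, ∀ z ∈ W α ∩ W β, (q α z * (q β z)⁻¹) 1 0 = 0) :
    ∃ g : V → Matrix (Fin 2) (Fin 2) ℂ, (∀ i j, AnalyticOnNhd ℝ (fun z => g z i j) U) ∧
      (∀ z ∈ U, (g z).det = 1) ∧ ∀ δ, ∀ z ∈ W δ, (q δ z * (g z)⁻¹) 1 0 = 0 := by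
  have hrow : ∀ δ, ∀ z ∈ W δ, q δ z 1 ≠ 0 := fun δ z hz h0 =>
    hdet δ z hz (det_eq_zero_of_row_eq_zero 1 (congrFun h0))
  obtain ⟨s, hs, hspan⟩ := exists_analyticOnNhd_section_of_span_eq hU hW hUW
    (l := fun δ z => q δ z 1) (fun δ z hz => analyticAt_pi_iff.2 fun j => hq δ 1 j z hz) hrow
    fun α β z hz => (mul_inv_one_zero_eq_zero_iff (hdet α z hz.1) (hdet β z hz.2)).1 (hcoc α β z hz)
  have hsub : ∀ δ, W δ ⊆ U := fun δ => hUW ▸ Set.subset_iUnion W δ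
  have hs_ne : ∀ z ∈ U, s z ≠ 0 := fun z hz h0 => by
    obtain ⟨δ, hδ⟩ := Set.mem_iUnion.1 (hUW ▸ hz)
    exact hrow δ z hδ (by simpa [h0] using hspan δ z hδ)
  obtain ⟨g, hg, hgs⟩ := exists_analyticOnNhd_det_eq_one_row_eq hs hs_ne
  refine ⟨g, hg, fun z hz => (hgs z hz).1, fun δ z hz => ?_⟩
  obtain ⟨hg_det, hg_row⟩ := hgs z (hsub δ hz)
  rw [mul_inv_one_zero_eq_zero_iff (hdet δ z hz) (hg_det ▸ one_ne_zero), hg_row]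
  exact hspan δ z hz

end Gluing

end BottomRow

theorem stmt12_general {V : Type*} [NormedAddCommGroup V] [InnerProductSpace ℝ V]
    [FiniteDimensional ℝ V] (ι : Type*) (U : Set V) (hUo : IsOpen U) (hUc : ContractibleSpace U)
    (Uδ : ι → Set V) (hδo : ∀ δ, IsOpen (Uδ δ)) (hcover : U = ⋃ δ, Uδ δ)
    (q : ι → V → Matrix (Fin 2) (Fin 2) ℂ)
    (hq_an : ∀ δ, ∀ i j, AnalyticOn ℝ (fun z => q δ z i j) (Uδ δ))
    (hq_det : ∀ δ, ∀ z ∈ Uδ δ, (q δ z).det = 1)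
    (hcoc : ∀ α β, ∀ z ∈ Uδ α ∩ Uδ β, (q α z * (q β z)⁻¹) 1 0 = 0) :
    ∃ h : ι → V → Matrix (Fin 2) (Fin 2) ℂ,
      (∀ δ, ∀ i j, AnalyticOn ℝ (fun z => h δ z i j) (Uδ δ)) ∧
      (∀ δ, ∀ z ∈ Uδ δ, (h δ z).det = 1) ∧
      (∀ δ, ∀ z ∈ Uδ δ, (h δ z) 1 0 = 0) ∧
      (∀ α β, ∀ z ∈ Uδ α ∩ Uδ β, q α z * (q β z)⁻¹ = h α z * (h β z)⁻¹) ∧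
      (∀ α β, ∀ z ∈ Uδ α ∩ Uδ β, (h α z)⁻¹ * q α z = (h β z)⁻¹ * q β z) := by
  have hq : ∀ δ i j, AnalyticOnNhd ℝ (fun z => q δ z i j) (Uδ δ) := fun δ i j =>
    (hδo δ).analyticOn_iff_analyticOnNhd.1 (hq_an δ i j)
  obtain ⟨g, hg, hg_det, hqg⟩ := exists_analyticOnNhd_mul_inv_one_zero_eq_zero hUo hδo hcover hq
    (fun δ z hz => (hq_det δ z hz).trans_ne one_ne_zero) hcoc
  have hsub : ∀ δ, Uδ δ ⊆ U := fun δ => hcover ▸ Set.subset_iUnion Uδ δ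
  have hg_unit : ∀ δ, ∀ z ∈ Uδ δ, IsUnit (g z).det := fun δ z hz =>
    hg_det z (hsub δ hz) ▸ isUnit_one
  have hgh : ∀ δ, ∀ z ∈ Uδ δ, (q δ z * (g z)⁻¹)⁻¹ * q δ z = g z := fun δ z hz => by
    rw [Matrix.mul_inv_rev, nonsing_inv_nonsing_inv _ (hg_unit δ z hz),
      nonsing_inv_mul_cancel_right _ _ (hq_det δ z hz ▸ isUnit_one)]
  refine ⟨fun δ z => q δ z * (g z)⁻¹, fun δ i j z hz => ?_, fun δ z hz => ?_, hqg,
    fun α β z hz => ?_, fun α β z hz => (hgh α z hz.1).trans (hgh β z hz.2).symm⟩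
  · refine AnalyticAt.analyticWithinAt (analyticAt_mul_apply (fun i j => hq δ i j z hz) ?_ i j)
    exact analyticAt_inv_apply (fun i j => hg i j z (hsub δ hz)) (hg_unit δ z hz).ne_zero
  · rw [det_mul, hq_det δ z hz, det_nonsing_inv, hg_det z (hsub δ hz), Ring.inverse_one, mul_one]
  · rw [Matrix.mul_inv_rev, nonsing_inv_nonsing_inv _ (hg_unit β z hz.2), ← Matrix.mul_assoc,
      nonsing_inv_mul_cancel_right _ _ (hg_unit α z hz.1)]

/-- Cocycle–coboundary step in the proof of Lemma 4.1: on a contractible open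
`U ⊆ ℂ` covered by open sets `U_δ`, real analytic `SL(2,ℂ)`-valued maps `q_δ`
whose transition maps `q_α q_β⁻¹` are upper triangular admit upper triangular real
analytic `SL(2,ℂ)`-valued maps `h_δ` with `q_α q_β⁻¹ = h_α h_β⁻¹` on overlaps;
equivalently `g = h_δ⁻¹ q_δ` is globally well defined. -/
theorem stmt12 (ι : Type*) (U : Set ℂ) (hUo : IsOpen U) (hUc : ContractibleSpace U)
    (Uδ : ι → Set ℂ) (hδo : ∀ δ, IsOpen (Uδ δ)) (hcover : U = ⋃ δ, Uδ δ)
    (q : ι → ℂ → Matrix (Fin 2) (Fin 2) ℂ)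
    (hq_an : ∀ δ, ∀ i j, AnalyticOn ℝ (fun z => q δ z i j) (Uδ δ))
    (hq_det : ∀ δ, ∀ z ∈ Uδ δ, (q δ z).det = 1)
    (hcoc : ∀ α β, ∀ z ∈ Uδ α ∩ Uδ β, (q α z * (q β z)⁻¹) 1 0 = 0) :
    ∃ h : ι → ℂ → Matrix (Fin 2) (Fin 2) ℂ,
      (∀ δ, ∀ i j, AnalyticOn ℝ (fun z => h δ z i j) (Uδ δ)) ∧
      (∀ δ, ∀ z ∈ Uδ δ, (h δ z).det = 1) ∧
      (∀ δ, ∀ z ∈ Uδ δ, (h δ z) 1 0 = 0) ∧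
      (∀ α β, ∀ z ∈ Uδ α ∩ Uδ β, q α z * (q β z)⁻¹ = h α z * (h β z)⁻¹) ∧
      (∀ α β, ∀ z ∈ Uδ α ∩ Uδ β, (h α z)⁻¹ * q α z = (h β z)⁻¹ * q β z) :=
  stmt12_general ι U hUo hUc Uδ hδo hcover q hq_an hq_det hcoc
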